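/- For a unary query Q on ordered unranked Σ-trees, the following are equivalent: (1) Q is definable in MSO; (2) Q = Q^∃_{QA} for some query automaton QA (existential semantics); (3) Q = Q^∀_{QA} for some query automaton QA (universal semantics). -/

import Mathlib

/-!
The equivalence of MSO with existential query automata is a Thatcher–Wright/Büchi type theorem for
unranked trees; the universal semantics is reduced to it by complementation.

*From MSO to automata.* A valuation is coded in the node labels (`vlabel`), and MSO formulas are
shown by induction to be recognizable (`recog_of_mso`). Recognizability (`Recog`) is stated with
deterministic forest automata, which process the forest of the first `i` children of a node, for
increasing `i`; this is bottom-up evaluation on the binary coding of the tree. Negation is then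
trivial, conjunction is a product, and both kinds of quantifier are projections, handled by the
powerset construction (`Recog.proj`), with `Recog.atMostOne` keeping first-order variables singletons.
A forest automaton becomes a NUTA that guesses the position of the free variable and checks, along
the children of every node, that the guessed forest states are correct (`exists_qaut_of_recog`). As
the horizontal languages of a NUTA are regular expressions, this needs Kleene's theorem
(`exists_regex`), proved by the McNaughton–Yamada recursion.

*From automata to MSO.* By the other half of Kleene's theorem, one DFA decides all horizontal
languages (`exists_common_dfa`; regularity of products and stars is read off from the finiteness of
the set of left quotients). A run together with the DFA states along sibling lists is a finite
labelling subject to conditions on first children, next siblings, last children, leaves and the root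
(`mem_existsSem_iff`), hence can be quantified in MSO by a block of set variables
(`exists_mso_of_qaut`).

*Universal semantics.* Complementing the selection set exchanges the two semantics up to complement
(`mem_forallSem_dual`), and MSO is closed under negation.
-/

namespace UnrankedTrees

/-! ### Unranked trees: tree domains and ordered unranked Σ-trees.
Nodes are finite strings over ℕ; a tree domain is a finite prefix-closed set
of nodes such that `s ++ [i] ∈ D` implies `s ++ [j] ∈ D` for all `j < i`. -/

abbrev Node : Type := List ℕ

/-- An ordered unranked tree over alphabet `A`: a tree domain with a labeling. -/
structure UTree (A : Type) where
  dom : Finset Node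
  nil_mem : ([] : Node) ∈ dom
  prefix_closed : ∀ ⦃s t : Node⦄, s ∈ dom → t <+: s → t ∈ dom
  sib_closed : ∀ ⦃s : Node⦄ ⦃i j : ℕ⦄, s ++ [i] ∈ dom → j < i → s ++ [j] ∈ dom
  label : Node → A

namespace UTree

variable {A : Type}

/-- The child relation `≺_ch`. -/
def childR (T : UTree A) (s t : Node) : Prop :=
  s ∈ T.dom ∧ t ∈ T.dom ∧ ∃ i : ℕ, t = s ++ [i]

/-- The descendant-or-self relation `≺*_ch` (the prefix relation). -/
def descR (T : UTree A) (s t : Node) : Prop :=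
  s ∈ T.dom ∧ t ∈ T.dom ∧ s <+: t

/-- The next-sibling relation `≺_ns`. -/
def nsR (T : UTree A) (s t : Node) : Prop :=
  s ∈ T.dom ∧ t ∈ T.dom ∧ ∃ (u : Node) (i : ℕ), s = u ++ [i] ∧ t = u ++ [i + 1]

/-- The sibling ordering `≺*_ns` (reflexive-transitive closure of next-sibling). -/
def sibR (T : UTree A) (s t : Node) : Prop :=
  s ∈ T.dom ∧ t ∈ T.dom ∧ ∃ (u : Node) (i j : ℕ), s = u ++ [i] ∧ t = u ++ [j] ∧ i ≤ j

/-- The first-child relation `≺_fc`. -/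
def firstChildR (T : UTree A) (s t : Node) : Prop :=
  s ∈ T.dom ∧ t ∈ T.dom ∧ t = s ++ [0]

/-- The number of children of a node. -/
noncomputable def childCount (T : UTree A) (s : Node) : ℕ :=
  Set.ncard {i : ℕ | s ++ [i] ∈ T.dom}

/-- The list of children of a node `s`, in sibling order: `s·0, …, s·(n-1)`. -/
noncomputable def childrenList (T : UTree A) (s : Node) : List Node :=
  (List.range (T.childCount s)).map fun i => s ++ [i]

/-- `s` is a leaf of `T`. -/
def isLeaf (T : UTree A) (s : Node) : Prop :=
  s ∈ T.dom ∧ ∀ i : ℕ, s ++ [i] ∉ T.dom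

/-- `s` has no next sibling in `T` (the root also counts as "last"). -/
def isLast (T : UTree A) (s : Node) : Prop :=
  s = [] ∨ ∃ (u : Node) (i : ℕ), s = u ++ [i] ∧ u ++ [i + 1] ∉ T.dom

end UTree

/-! ### MSO over ordered unranked trees.
First-order variables and monadic second-order variables are indexed by ℕ.
First-order quantifiers range over the nodes of the tree, set quantifiers over
sets of nodes of the tree. -/

inductive MSO (A : Type) : Type where
  | eq : ℕ → ℕ → MSO A
  | desc : ℕ → ℕ → MSO A               -- x ≺*_ch y
  | sib : ℕ → ℕ → MSO A                -- x ≺*_ns y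
  | lab : A → ℕ → MSO A                -- P_a(x)
  | mem : ℕ → ℕ → MSO A                -- X(x)
  | not : MSO A → MSO A
  | and : MSO A → MSO A → MSO A
  | exFO : ℕ → MSO A → MSO A
  | exSO : ℕ → MSO A → MSO A

namespace MSO

variable {A : Type}

def Sat (T : UTree A) (v : ℕ → Node) (V : ℕ → Set Node) : MSO A → Prop
  | .eq x y => v x = v y
  | .desc x y => T.descR (v x) (v y)
  | .sib x y => T.sibR (v x) (v y)
  | .lab a x => v x ∈ T.dom ∧ T.label (v x) = a
  | .mem X x => v x ∈ V X
  | .not φ => ¬ Sat T v V φ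
  | .and φ ψ => Sat T v V φ ∧ Sat T v V ψ
  | .exFO n φ => ∃ s ∈ T.dom, Sat T (Function.update v n s) V φ
  | .exSO n φ => ∃ S : Set Node, S ⊆ ↑T.dom ∧ Sat T v (Function.update V n S) φ

/-- `φ`, as a sentence, defines the set `L` of trees.  (Quantifying over all
valuations forces the truth value to be independent of the valuation, i.e.
`φ` behaves as a sentence.) -/
def DefinesB (φ : MSO A) (L : Set (UTree A)) : Prop :=
  ∀ (T : UTree A) (v : ℕ → Node) (V : ℕ → Set Node), T ∈ L ↔ Sat T v V φ

/-- `φ`, as a formula whose only free variable is the first-order variable `0`,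
defines the unary query `Q`. -/
def DefinesU (φ : MSO A) (Q : UTree A → Set Node) : Prop :=
  ∀ (T : UTree A) (v : ℕ → Node) (V : ℕ → Set Node) (s : Node), s ∈ T.dom →
    (s ∈ Q T ↔ Sat T (Function.update v 0 s) V φ)

end MSO

/-! ### Nondeterministic unranked tree automata (NUTA). -/

/-- A nondeterministic unranked tree automaton: finitely many states, final
states `F`, and `δ(q,a)` a regular language over the states, given by a
regular expression. -/
structure NUTA (A : Type) where
  Q : Type
  fintype_Q : Fintype Q
  F : Set Q
  δ : Q → A → RegularExpression Q

namespace NUTA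

variable {A : Type}

/-- `ρ` is a run of `N` on `T`: at every node `s` labelled `a` with children
`s·0, …, s·(n-1)`, the string `ρ(s·0) ⋯ ρ(s·(n-1))` lies in `δ(ρ(s), a)`. -/
def IsRun (N : NUTA A) (T : UTree A) (ρ : Node → N.Q) : Prop :=
  ∀ s ∈ T.dom, ((T.childrenList s).map ρ) ∈ (N.δ (ρ s) (T.label s)).matches'

/-- A tree is accepted if some run puts the root in a final state. -/
def Accepts (N : NUTA A) (T : UTree A) : Prop :=
  ∃ ρ : Node → N.Q, N.IsRun T ρ ∧ ρ [] ∈ N.F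

end NUTA

/-- A set of unranked trees is regular if it is the language of some NUTA. -/
def RegularLang {A : Type} (L : Set (UTree A)) : Prop :=
  ∃ N : NUTA A, ∀ T : UTree A, N.Accepts T ↔ T ∈ L

/-! ### Query automata. -/

/-- A query automaton: a NUTA together with a selection set `S ⊆ Q × Σ`. -/
structure QAut (A : Type) where
  N : NUTA A
  S : Set (N.Q × A)

namespace QAut

variable {A : Type}

/-- Existential semantics: `s` is selected iff `(ρ(s), λ_T(s)) ∈ S` for
*some* accepting run `ρ`. -/
def existsSem (QA : QAut A) (T : UTree A) : Set Node :=
  {s | s ∈ T.dom ∧ ∃ ρ : Node → QA.N.Q, QA.N.IsRun T ρ ∧ ρ [] ∈ QA.N.F ∧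
    (ρ s, T.label s) ∈ QA.S}

/-- Universal semantics: `s` is selected iff `(ρ(s), λ_T(s)) ∈ S` for
*every* accepting run `ρ`. -/
def forallSem (QA : QAut A) (T : UTree A) : Set Node :=
  {s | s ∈ T.dom ∧ ∀ ρ : Node → QA.N.Q, QA.N.IsRun T ρ → ρ [] ∈ QA.N.F →
    (ρ s, T.label s) ∈ QA.S}

end QAut

/-! ### Kleene's theorem: regular expressions and finite automata -/

section Kleene

open Computability

variable {α σ : Type}

/-- A language denoted by some regular expression. -/
def IsRex (L : Language α) : Prop := ∃ P : RegularExpression α, P.matches' = L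

theorem IsRex.add {L M : Language α} (hL : IsRex L) (hM : IsRex M) : IsRex (L + M) := by
  obtain ⟨P, rfl⟩ := hL
  obtain ⟨R, rfl⟩ := hM
  exact ⟨P + R, by simp⟩

theorem IsRex.mul {L M : Language α} (hL : IsRex L) (hM : IsRex M) : IsRex (L * M) := by
  obtain ⟨P, rfl⟩ := hL
  obtain ⟨R, rfl⟩ := hM
  exact ⟨P * R, by simp⟩

theorem IsRex.star {L : Language α} (hL : IsRex L) : IsRex L∗ := by
  obtain ⟨P, rfl⟩ := hL
  exact ⟨P.star, by simp⟩

theorem IsRex.zero : IsRex (0 : Language α) := ⟨0, by simp⟩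

theorem IsRex.one : IsRex (1 : Language α) := ⟨1, by simp⟩

theorem IsRex.char (a : α) : IsRex ({[a]} : Language α) := ⟨.char a, by simp⟩

theorem IsRex.sum {ι : Type*} (s : Finset ι) (L : ι → Language α) (h : ∀ i ∈ s, IsRex (L i)) :
    IsRex (∑ i ∈ s, L i) := by
  classical
  induction s using Finset.induction_on with
  | empty => simpa using IsRex.zero
  | insert i s hi ih =>
    rw [Finset.sum_insert hi]
    exact (h i (by simp)).add (ih fun j hj => h j (by simp [hj]))

theorem mem_finset_sum {ι : Type*} (s : Finset ι) (L : ι → Language α) (w : List α) :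
    w ∈ ∑ i ∈ s, L i ↔ ∃ i ∈ s, w ∈ L i := by
  classical
  induction s using Finset.induction_on with
  | empty => simp
  | insert i s hi ih =>
    rw [Finset.sum_insert hi, Language.mem_add, ih]
    simp

/-- The words leading from `p` to `q` in the transition system `step` whose intermediate states
(after a proper nonempty prefix) all lie in `S`. -/
def pathLang (step : σ → α → σ) (S : Set σ) (p q : σ) : Language α :=
  {w | w.foldl step p = q ∧ ∀ u v, w = u ++ v → u ≠ [] → v ≠ [] → u.foldl step p ∈ S}

theorem mem_pathLang {step : σ → α → σ} {S : Set σ} {p q : σ} {w : List α} :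
    w ∈ pathLang step S p q ↔
      w.foldl step p = q ∧ ∀ u v, w = u ++ v → u ≠ [] → v ≠ [] → u.foldl step p ∈ S :=
  Iff.rfl

theorem pathLang_mono (step : σ → α → σ) {S S' : Set σ} (h : S ⊆ S') (p q : σ) :
    pathLang step S p q ≤ pathLang step S' p q :=
  fun _ hw => ⟨hw.1, fun u v e hu hv => h (hw.2 u v e hu hv)⟩

theorem pathLang_mul_le (step : σ → α → σ) {S : Set σ} {r : σ} (hr : r ∈ S) (p q : σ) :
    pathLang step S p r * pathLang step S r q ≤ pathLang step S p q := by
  intro w hw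
  obtain ⟨x, hx, y, hy, rfl⟩ := Language.mem_mul.1 hw
  refine ⟨by rw [List.foldl_append, hx.1, hy.1], ?_⟩
  intro u v e hu hv
  rcases List.append_eq_append_iff.1 e with ⟨a, rfl, rfl⟩ | ⟨a, rfl, rfl⟩
  · rw [List.foldl_append, hx.1]
    rcases eq_or_ne a [] with rfl | ha
    · simpa using hr
    · exact hy.2 a v rfl ha hv
  · rcases eq_or_ne a [] with rfl | ha
    · have := hx.1
      simp only [List.append_nil] at this
      rw [this]; exact hr
    · exact hx.2 u a rfl hu ha

/-- The McNaughton–Yamada recursion: a path through `insert r S` either avoids `r` or decomposes at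
its visits to `r`. -/
theorem pathLang_insert (step : σ → α → σ) (S : Set σ) (r p q : σ) :
    pathLang step (insert r S) p q =
      pathLang step S p q +
        pathLang step S p r * (pathLang step S r r)∗ * pathLang step S r q := by
  have hmono := pathLang_mono step (Set.subset_insert r S)
  have hmem : r ∈ insert r S := Set.mem_insert r S
  apply le_antisymm
  · have key : ∀ n (w : List α), w.length = n → ∀ p q, w ∈ pathLang step (insert r S) p q →
        w ∈ pathLang step S p q +
        pathLang step S p r * (pathLang step S r r)∗ * pathLang step S r q := by
      intro n
      induction n using Nat.strong_induction_on with
      | _ n ih =>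
        intro w hn p q hw
        by_cases hS : ∀ u v, w = u ++ v → u ≠ [] → v ≠ [] → u.foldl step p ∈ S
        · exact Or.inl ⟨hw.1, hS⟩
        · push Not at hS
          obtain ⟨u, v, rfl, hu, hv, hnot⟩ := hS
          have hur : u.foldl step p = r := by
            rcases hw.2 u v rfl hu hv with h | h
            · exact h
            · exact absurd h hnot
          have hu' : 0 < u.length := List.length_pos_iff.2 hu
          have hv' : 0 < v.length := List.length_pos_iff.2 hv
          rw [List.length_append] at hn
          have h1 := ih u.length (by omega) u rfl p r
            ⟨hur, fun a b e ha hb => hw.2 a (b ++ v) (by simp [e]) ha (by simp [hb])⟩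
          have h2 := ih v.length (by omega) v rfl r q
            ⟨by rw [← hw.1, List.foldl_append, hur], fun a b e ha hb => by
              have := hw.2 (u ++ a) b (by simp [e]) (by simp [hu]) hb
              rwa [List.foldl_append, hur] at this⟩
          have h3 := Language.append_mem_mul h1 h2
          refine Or.inr ?_
          revert h3
          generalize pathLang step S p r = X
          generalize pathLang step S r r = Y
          generalize pathLang step S r q = Z
          intro h3
          have e1 : X + X * Y∗ * Y ≤ X * Y∗ := by
            rw [mul_assoc]
            refine sup_le (le_mul_of_one_le_right' one_le_kstar) ?_
            exact mul_le_mul_right kstar_mul_le_kstar _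
          have e2 : Z + Y * Y∗ * Z ≤ Y∗ * Z := by
            refine sup_le (le_mul_of_one_le_left' one_le_kstar) ?_
            exact mul_le_mul_left mul_kstar_le_kstar _
          have e3 := (mul_le_mul' e1 e2) h3
          have e4 : X * Y∗ * (Y∗ * Z) = X * Y∗ * Z := by
            rw [← mul_assoc, mul_assoc X, kstar_mul_kstar]
          rwa [e4] at e3
    exact fun w hw => key _ w rfl p q hw
  · refine sup_le (hmono p q) ?_
    rw [mul_assoc]
    have : (pathLang step S r r)∗ * pathLang step S r q ≤ pathLang step (insert r S) r q :=
      kstar_mul_le (hmono r q)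
        ((mul_le_mul_left (hmono r r) _).trans (pathLang_mul_le step hmem r q))
    exact (mul_le_mul' (hmono p r) this).trans (pathLang_mul_le step hmem p q)

theorem isRex_pathLang [Finite α] (step : σ → α → σ) (S : Finset σ) :
    ∀ p q, IsRex (pathLang step (S : Set σ) p q) := by
  classical
  cases nonempty_fintype α
  induction S using Finset.induction_on with
  | empty =>
    intro p q
    have : pathLang step ((∅ : Finset σ) : Set σ) p q =
        (if p = q then 1 else 0) + ∑ a : α, if step p a = q then {[a]} else 0 := by
      ext w
      rw [Language.mem_add, mem_finset_sum, mem_pathLang]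
      rcases w with _ | ⟨a, _ | ⟨b, w⟩⟩
      · have h2 : ∀ a : α, [] ∉ (if step p a = q then ({[a]} : Language α) else 0) := by
          intro a h
          split_ifs at h
          · exact absurd (Set.mem_singleton_iff.1 h) (by simp)
          · exact h
        by_cases h : p = q <;> simp_all [Language.mem_one]
      · have h1 : [a] ∉ (if p = q then (1 : Language α) else 0) := by
          intro h
          split_ifs at h
          · exact absurd (Set.mem_singleton_iff.1 h) (by simp)
          · exact h
        simp only [h1, false_or]
        constructor
        · rintro ⟨h, -⟩
          refine ⟨a, Finset.mem_univ _, ?_⟩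
          simp only [List.foldl_cons, List.foldl_nil] at h
          rw [if_pos h]; rfl
        · rintro ⟨b, -, h⟩
          split_ifs at h with hb
          · have h := Set.mem_singleton_iff.1 h
            simp only [List.cons.injEq, and_true] at h
            subst h
            refine ⟨by simpa using hb, ?_⟩
            intro u v e hu hv
            have := congrArg List.length e
            have hu' : 0 < u.length := List.length_pos_iff.2 hu
            have hv' : 0 < v.length := List.length_pos_iff.2 hv
            simp at this
            omega
          · exact absurd h (Language.notMem_zero _)
      · constructor
        · rintro ⟨-, h⟩
          exact absurd (h [a] (b :: w) rfl (by simp) (by simp)) (by simp)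
        · rintro (h | ⟨c, -, h⟩)
          · split_ifs at h
            · exact absurd (Set.mem_singleton_iff.1 h) (by simp)
            · exact absurd h (Language.notMem_zero _)
          · split_ifs at h
            · exact absurd (Set.mem_singleton_iff.1 h) (by simp)
            · exact absurd h (Language.notMem_zero _)
    rw [this]
    refine IsRex.add ?_ (IsRex.sum _ _ fun a _ => ?_)
    · split_ifs
      exacts [IsRex.one, IsRex.zero]
    · split_ifs
      exacts [IsRex.char a, IsRex.zero]
  | insert r S _ ih =>
    intro p q
    rw [Finset.coe_insert, pathLang_insert]
    exact (ih p q).add (((ih p r).mul (ih r r).star).mul (ih r q))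

/-- Kleene's theorem, from automata to expressions. -/
theorem exists_regex [Finite α] [Finite σ] (step : σ → α → σ) (p q : σ) :
    ∃ P : RegularExpression α, ∀ w, w ∈ P.matches' ↔ w.foldl step p = q := by
  cases nonempty_fintype σ
  obtain ⟨P, hP⟩ := isRex_pathLang step Finset.univ p q
  refine ⟨P, fun w => ?_⟩
  rw [hP, mem_pathLang]
  simp

theorem isRegular_of_finite_range {L : Language α} {β : Type*} {s : Set β} (hs : s.Finite)
    (f : β → Language α) (h : ∀ x, ∃ b ∈ s, L.leftQuotient x = f b) : L.IsRegular := by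
  refine Language.IsRegular.of_finite_range_leftQuotient ((hs.image f).subset ?_)
  rintro _ ⟨x, rfl⟩
  obtain ⟨b, hb, e⟩ := h x
  exact ⟨b, hb, e.symm⟩

/-- `x⁻¹(LM)` is determined by `x⁻¹L` and the set of all `v⁻¹M` with `x = uv`, `u ∈ L`. -/
theorem isRegular_mul {L M : Language α} (hL : L.IsRegular) (hM : M.IsRegular) :
    (L * M).IsRegular := by
  have fL := hL.finite_range_leftQuotient
  have fM := hM.finite_range_leftQuotient
  refine isRegular_of_finite_range (fL.prod fM.finite_subsets)
    (fun b => b.1 * M + ⨆ l ∈ b.2, l) fun x => ?_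
  refine ⟨(L.leftQuotient x, {l | ∃ u v, x = u ++ v ∧ u ∈ L ∧ l = M.leftQuotient v}),
    ⟨⟨x, rfl⟩, ?_⟩, ?_⟩
  · rintro _ ⟨u, v, -, -, rfl⟩
    exact ⟨v, rfl⟩
  · ext y
    simp only [Language.mem_leftQuotient, Language.mem_mul, Language.mem_add, Language.mem_iSup]
    constructor
    · rintro ⟨a, ha, b, hb, e⟩
      rcases List.append_eq_append_iff.1 e with ⟨c, rfl, rfl⟩ | ⟨c, rfl, rfl⟩
      · exact Or.inr ⟨_, ⟨a, c, rfl, ha, rfl⟩, hb⟩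
      · exact Or.inl ⟨c, ha, b, hb, rfl⟩
    · rintro (⟨a, ha, b, hb, rfl⟩ | ⟨_, ⟨u, v, rfl, hu, rfl⟩, hy⟩)
      · exact ⟨x ++ a, ha, b, hb, by simp⟩
      · exact ⟨u, hu, v ++ y, hy, by simp⟩

/-- `x⁻¹(L∗)` is determined by whether `x ∈ L∗` and by the set of all `v⁻¹L` with `x = uv`,
`u ∈ L∗`. -/
theorem isRegular_kstar {L : Language α} (hL : L.IsRegular) : (L∗).IsRegular := by
  classical
  have fL := hL.finite_range_leftQuotient
  refine isRegular_of_finite_range ((Set.finite_univ (α := Prop)).prod fL.finite_subsets)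
    (fun b => (if b.1 then 1 else 0) + ⨆ l ∈ b.2, l * L∗) fun x => ?_
  refine ⟨(x ∈ L∗, {l | ∃ u v, x = u ++ v ∧ u ∈ L∗ ∧ l = L.leftQuotient v}),
    ⟨trivial, ?_⟩, ?_⟩
  · rintro _ ⟨u, v, -, -, rfl⟩
    exact ⟨v, rfl⟩
  · ext y
    simp only [Language.mem_leftQuotient, Language.mem_add, Language.mem_iSup]
    constructor
    · intro h
      obtain ⟨W, e, hW⟩ := Language.mem_kstar.1 h
      clear h
      induction W generalizing x with
      | nil =>
        simp only [List.flatten_nil, List.append_eq_nil_iff] at e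
        obtain ⟨rfl, rfl⟩ := e
        left
        rw [if_pos (Language.nil_mem_kstar L)]
        exact Language.nil_mem_one
      | cons w W ih =>
        have hw : w ∈ L := hW w (by simp)
        have hW' : ∀ z ∈ W, z ∈ L := fun z hz => hW z (by simp [hz])
        have hcons : ∀ u ∈ L∗, w ++ u ∈ L∗ := fun u hu =>
          (mul_kstar_le_kstar : L * L∗ ≤ L∗) (Language.append_mem_mul hw hu)
        rw [List.flatten_cons] at e
        rcases List.append_eq_append_iff.1 e with ⟨c, rfl, e'⟩ | ⟨c, rfl, e'⟩
        · rw [e']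
          exact Or.inr ⟨_, ⟨[], x, rfl, Language.nil_mem_kstar L, rfl⟩,
            Language.append_mem_mul (l := L.leftQuotient x) hw (Language.join_mem_kstar hW')⟩
        · rcases ih c e'.symm hW' with h | ⟨_, ⟨u, v, rfl, hu, rfl⟩, hy⟩
          · split_ifs at h with hc
            · left
              rwa [if_pos (hcons c hc)]
            · exact absurd h (Language.notMem_zero _)
          · exact Or.inr ⟨_, ⟨w ++ u, v, by simp, hcons u hu, rfl⟩, hy⟩
    · rintro (h | ⟨_, ⟨u, v, rfl, hu, rfl⟩, hy⟩)
      · split_ifs at h with hx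
        · rw [Language.mem_one] at h
          simpa [h] using hx
        · exact absurd h (Language.notMem_zero _)
      · obtain ⟨a, ha, b, hb, rfl⟩ := Language.mem_mul.1 hy
        have h1 : v ++ a ++ b ∈ L∗ :=
          (mul_kstar_le_kstar : L * L∗ ≤ L∗) (Language.append_mem_mul ha hb)
        have h2 : u ++ (v ++ a ++ b) ∈ L∗ := by
          have := Language.append_mem_mul hu h1
          rwa [kstar_mul_kstar] at this
        simpa using h2

theorem isRegular_matches (P : RegularExpression α) : P.matches'.IsRegular := by
  induction P with
  | zero =>
    exact isRegular_of_finite_range (s := {0}) (by simp) id fun x => ⟨0, rfl, rfl⟩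
  | epsilon =>
    refine isRegular_of_finite_range (s := {0, 1}) (by simp) id fun x => ?_
    rcases x with _ | ⟨a, x⟩
    · exact ⟨1, by simp, rfl⟩
    · refine ⟨0, by simp, ?_⟩
      ext y
      simp [Language.mem_leftQuotient, Language.mem_one]
  | char a =>
    refine isRegular_of_finite_range (s := {0, 1, {[a]}}) (by simp) id fun x => ?_
    rcases x with _ | ⟨b, x⟩
    · exact ⟨{[a]}, by simp, rfl⟩
    · have key : ∀ y, y ∈ Language.leftQuotient ({[a]} : Language α) (b :: x) ↔
          b = a ∧ x = [] ∧ y = [] := by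
        intro y
        rw [Language.mem_leftQuotient]
        refine (Set.mem_singleton_iff).trans ?_
        simp
      by_cases h : b = a ∧ x = []
      · refine ⟨1, by simp, ?_⟩
        ext y
        rw [RegularExpression.matches'_char, key]
        simp [Language.mem_one, h]
      · refine ⟨0, by simp, ?_⟩
        ext y
        rw [RegularExpression.matches'_char, key]
        simp only [id, Language.notMem_zero, iff_false]
        tauto
  | plus P R hP hR => exact hP.add hR
  | comp P R hP hR => exact isRegular_mul hP hR
  | star P hP => exact isRegular_kstar hP

/-- Finitely many regular expressions are recognised simultaneously by one finite transition
system, the product of automata for each of them. -/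
theorem exists_common_dfa {ι : Type} [Finite ι] (P : ι → RegularExpression α) :
    ∃ (H : Type) (_ : Finite H) (h₀ : H) (step : H → α → H) (acc : ι → Set H),
      ∀ i w, w ∈ (P i).matches' ↔ w.foldl step h₀ ∈ acc i := by
  choose τ hτ M hM using fun i => Language.isRegular_iff.1 (isRegular_matches (P i))
  have : ∀ i, Finite (τ i) := fun i => (hτ i).finite
  refine ⟨∀ i, τ i, inferInstance, fun i => (M i).start, fun h a i => (M i).step (h i) a,
    fun i => {h | h i ∈ (M i).accept}, fun i w => ?_⟩
  have key : ∀ (w : List α) (h : ∀ i, τ i),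
      (w.foldl (fun h a i => (M i).step (h i) a) h) i = (M i).evalFrom (h i) w := by
    intro w
    induction w with
    | nil => intro h; rfl
    | cons a w ih => intro h; rw [List.foldl_cons, ih]; rfl
  rw [← hM i, DFA.mem_accepts, Set.mem_ofPred_eq, key]
  rfl

end Kleene

/-! ### Forests inside a tree -/

section Forests

variable {A : Type}

theorem UTree.mem_dom_iff (T : UTree A) (s : Node) (i : ℕ) :
    s ++ [i] ∈ T.dom ↔ i < T.childCount s := by
  classical
  have hfin : {i : ℕ | s ++ [i] ∈ T.dom}.Finite :=
    T.dom.finite_toSet.preimage (f := fun i : ℕ => s ++ [i]) (fun a _ b _ h => by simpa using h)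
  have hex : ∃ n, s ++ [n] ∉ T.dom := by
    obtain ⟨n, hn⟩ := hfin.exists_notMem
    exact ⟨n, hn⟩
  have hS : {i : ℕ | s ++ [i] ∈ T.dom} = Set.Iio (Nat.find hex) := by
    ext j
    constructor
    · intro hj
      by_contra hlt
      rcases (not_lt.1 (Set.mem_Iio.not.1 hlt)).eq_or_lt with e | h
      · exact Nat.find_spec hex (e ▸ hj)
      · exact Nat.find_spec hex (T.sib_closed hj h)
    · intro hj
      exact not_not.1 (Nat.find_min hex hj)
  have hc : T.childCount s = Nat.find hex := by
    rw [UTree.childCount, hS, ← Finset.coe_Iio, Set.ncard_coe_finset, Nat.card_Iio]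
  rw [hc]
  exact Set.ext_iff.1 hS i

/-- A strict bound on the lengths of the nodes of `T`. -/
def UTree.height (T : UTree A) : ℕ := T.dom.sup List.length + 1

theorem UTree.length_lt_height (T : UTree A) {s : Node} (hs : s ∈ T.dom) :
    s.length < T.height :=
  Nat.lt_succ_of_le (Finset.le_sup (f := List.length) hs)

/-- `t` lies in the forest formed by the subtrees rooted at the first `i` children of `s`. -/
def Below (s : Node) (i : ℕ) (t : Node) : Prop := ∃ j < i, s ++ [j] <+: t

theorem not_below_zero (s t : Node) : ¬ Below s 0 t := by
  rintro ⟨j, hj, -⟩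
  exact absurd hj (by simp)

theorem UTree.prefix_iff (T : UTree A) {u t : Node} (ht : t ∈ T.dom) :
    u <+: t ↔ t = u ∨ Below u (T.childCount u) t := by
  constructor
  · rintro ⟨w, rfl⟩
    rcases w with _ | ⟨i, w⟩
    · left; simp
    · right
      have hp : u ++ [i] <+: u ++ i :: w := ⟨w, by simp⟩
      exact ⟨i, (T.mem_dom_iff u i).1 (T.prefix_closed ht hp), hp⟩
  · rintro (rfl | ⟨j, -, h⟩)
    · exact List.prefix_rfl
    · exact (List.prefix_append u [j]).trans h

theorem UTree.below_succ (T : UTree A) {s t : Node} {i : ℕ} (ht : t ∈ T.dom) :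
    Below s (i + 1) t ↔
      Below s i t ∨ t = s ++ [i] ∨ Below (s ++ [i]) (T.childCount (s ++ [i])) t := by
  rw [← T.prefix_iff ht]
  constructor
  · rintro ⟨j, hj, h⟩
    rcases Nat.lt_succ_iff_lt_or_eq.1 hj with hj | rfl
    · exact Or.inl ⟨j, hj, h⟩
    · exact Or.inr h
  · rintro (⟨j, hj, h⟩ | h)
    · exact ⟨j, by omega, h⟩
    · exact ⟨i, by omega, h⟩

theorem Below.not_prefix {s t : Node} {i : ℕ} (h : Below s i t) : ¬ s ++ [i] <+: t := by
  obtain ⟨j, hj, h⟩ := h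
  intro h'
  have h2 := (List.prefix_of_prefix_length_le h h' (by simp)).eq_of_length (by simp)
  simp at h2
  omega

theorem not_below_self (s : Node) (i : ℕ) : ¬ Below s i s := by
  rintro ⟨j, -, h⟩
  have := h.length_le
  simp at this

theorem UTree.exists_below_succ (T : UTree A) {s : Node} {i : ℕ} (hi : s ++ [i] ∈ T.dom)
    (p : Node → Prop) :
    (∃ t ∈ T.dom, Below s (i + 1) t ∧ p t) ↔
      (∃ t ∈ T.dom, Below s i t ∧ p t) ∨ p (s ++ [i]) ∨
        ∃ t ∈ T.dom, Below (s ++ [i]) (T.childCount (s ++ [i])) t ∧ p t := by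
  constructor
  · rintro ⟨t, ht, h, hp⟩
    rcases (T.below_succ ht).1 h with h | rfl | h
    · exact Or.inl ⟨t, ht, h, hp⟩
    · exact Or.inr (Or.inl hp)
    · exact Or.inr (Or.inr ⟨t, ht, h, hp⟩)
  · rintro (⟨t, ht, h, hp⟩ | hp | ⟨t, ht, h, hp⟩)
    · exact ⟨t, ht, (T.below_succ ht).2 (Or.inl h), hp⟩
    · exact ⟨_, hi, (T.below_succ hi).2 (Or.inr (Or.inl rfl)), hp⟩
    · exact ⟨t, ht, (T.below_succ ht).2 (Or.inr (Or.inr h)), hp⟩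

theorem UTree.exists_prefix_iff (T : UTree A) {u : Node} (hu : u ∈ T.dom) (p : Node → Prop) :
    (∃ t ∈ T.dom, u <+: t ∧ p t) ↔
      p u ∨ ∃ t ∈ T.dom, Below u (T.childCount u) t ∧ p t := by
  constructor
  · rintro ⟨t, ht, h, hp⟩
    rcases (T.prefix_iff ht).1 h with rfl | h
    · exact Or.inl hp
    · exact Or.inr ⟨t, ht, h, hp⟩
  · rintro (hp | ⟨t, ht, h, hp⟩)
    · exact ⟨u, hu, List.prefix_rfl, hp⟩
    · exact ⟨t, ht, (T.prefix_iff ht).2 (Or.inr h), hp⟩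

theorem UTree.exists_dom_iff (T : UTree A) (p : Node → Prop) :
    (∃ t ∈ T.dom, p t) ↔
      p [] ∨ ∃ t ∈ T.dom, Below [] (T.childCount []) t ∧ p t := by
  rw [← T.exists_prefix_iff T.nil_mem]
  simp

/-- Induction along the binary tree that codes `T`: the forest of the first `i + 1` children of `s`
is assembled from the forest of the first `i` children, the node `s ++ [i]`, and the forest of all
children of `s ++ [i]`. -/
theorem UTree.forest_induction (T : UTree A) (J : Node → ℕ → Prop)
    (zero : ∀ s ∈ T.dom, J s 0)
    (succ : ∀ s ∈ T.dom, ∀ i, s ++ [i] ∈ T.dom → J s i →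
      J (s ++ [i]) (T.childCount (s ++ [i])) → J s (i + 1)) :
    ∀ s ∈ T.dom, ∀ i ≤ T.childCount s, J s i := by
  have key : ∀ n s, s ∈ T.dom → T.height - s.length = n → ∀ i ≤ T.childCount s, J s i := by
    intro n
    induction n using Nat.strong_induction_on with
    | _ n ih =>
      intro s hs hn i
      induction i with
      | zero => exact fun _ => zero s hs
      | succ i ihi =>
        intro hi
        have hd : s ++ [i] ∈ T.dom := (T.mem_dom_iff s i).2 hi
        have := T.length_lt_height hd
        refine succ s hs i hd (ihi (by omega)) (ih _ ?_ (s ++ [i]) hd rfl _ le_rfl)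
        simp at this ⊢
        omega
  exact fun s hs => key _ s hs rfl

end Forests

/-! ### Deterministic forest automata -/

section Automata

variable {A B : Type}

/-- A finite deterministic bottom-up automaton on ordered forests. The state of the empty forest is
`init`; a forest with state `h` extended on the right by a tree with root label `b` whose forest of
children has state `h'` gets the state `step h b h'`. The alphabet may be infinite. -/
structure ForestAut (B : Type) where
  H : Type
  finite_H : Finite H
  init : H
  step : H → B → H → H

namespace ForestAut

/-- Fuel-bounded form of `ForestAut.eval`; the first argument bounds the depth of recursion. -/
noncomputable def evalAux (M : ForestAut B) (T : UTree A) (β : Node → B) :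
    ℕ → Node → ℕ → M.H
  | 0, _, _ => M.init
  | n + 1, s, i =>
    Nat.rec M.init (fun j h => M.step h (β (s ++ [j]))
      (evalAux M T β n (s ++ [j]) (T.childCount (s ++ [j])))) i

/-- The state reached by `M` on the forest of the first `i` children of `s`, where the nodes of `T`
are relabelled by `β`. -/
noncomputable def eval (M : ForestAut B) (T : UTree A) (β : Node → B) (s : Node) (i : ℕ) : M.H :=
  M.evalAux T β (T.height - s.length) s i

theorem eval_zero (M : ForestAut B) (T : UTree A) (β : Node → B) (s : Node) :
    M.eval T β s 0 = M.init := by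
  rw [eval]
  cases T.height - s.length <;> rfl

theorem eval_succ (M : ForestAut B) (T : UTree A) (β : Node → B) {s : Node} (hs : s ∈ T.dom)
    (i : ℕ) : M.eval T β s (i + 1) = M.step (M.eval T β s i) (β (s ++ [i]))
      (M.eval T β (s ++ [i]) (T.childCount (s ++ [i]))) := by
  have h := T.length_lt_height hs
  obtain ⟨n, hn⟩ : ∃ n, T.height - s.length = n + 1 := ⟨T.height - s.length - 1, by omega⟩
  have hn' : T.height - (s ++ [i]).length = n := by simp; omega
  rw [eval, eval, eval, hn, hn']
  rfl

theorem eval_congr (M : ForestAut B) (T : UTree A) {β β' : Node → B} :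
    ∀ s ∈ T.dom, ∀ i ≤ T.childCount s, (∀ t ∈ T.dom, Below s i t → β t = β' t) →
      M.eval T β s i = M.eval T β' s i := by
  refine T.forest_induction _ ?_ ?_
  · intro s hs _
    rw [eval_zero, eval_zero]
  · intro s hs i hi h1 h2 h
    rw [eval_succ M T β hs, eval_succ M T β' hs,
      h1 fun t ht hb => h t ht ((T.below_succ ht).2 (Or.inl hb)),
      h2 fun t ht hb => h t ht ((T.below_succ ht).2 (Or.inr (Or.inr hb))),
      h _ hi ((T.below_succ hi).2 (Or.inr (Or.inl rfl)))]

end ForestAut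

/-- A property of relabelled trees is recognizable if a forest automaton decides it from the label
of the root and the state of the forest of its children. -/
def Recog (P : UTree A → (Node → B) → Prop) : Prop :=
  ∃ (M : ForestAut B) (acc : B → M.H → Prop), ∀ T β,
    P T β ↔ acc (β []) (M.eval T β [] (T.childCount []))

namespace Recog

theorem congr {P : UTree A → (Node → B) → Prop} (hP : Recog P) (T : UTree A) {β β' : Node → B}
    (h : ∀ t ∈ T.dom, β t = β' t) : P T β ↔ P T β' := by
  obtain ⟨M, acc, hM⟩ := hP
  rw [hM, hM, h [] T.nil_mem, M.eval_congr T [] T.nil_mem _ le_rfl fun t ht _ => h t ht]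

theorem not {P : UTree A → (Node → B) → Prop} (hP : Recog P) : Recog fun T β => ¬ P T β := by
  obtain ⟨M, acc, hM⟩ := hP
  exact ⟨M, fun b h => ¬ acc b h, fun T β => not_congr (hM T β)⟩

theorem and {P P' : UTree A → (Node → B) → Prop} (hP : Recog P) (hP' : Recog P') :
    Recog fun T β => P T β ∧ P' T β := by
  obtain ⟨M, acc, hM⟩ := hP
  obtain ⟨M', acc', hM'⟩ := hP'
  have := M.finite_H
  have := M'.finite_H
  let N : ForestAut B := ⟨M.H × M'.H, inferInstance, (M.init, M'.init),
    fun h b k => (M.step h.1 b k.1, M'.step h.2 b k.2)⟩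
  refine ⟨N, fun b h => acc b h.1 ∧ acc' b h.2, fun T β => ?_⟩
  have key : ∀ s ∈ T.dom, ∀ i ≤ T.childCount s,
      N.eval T β s i = (M.eval T β s i, M'.eval T β s i) := by
    refine T.forest_induction _ ?_ ?_
    · intro s hs
      simp only [ForestAut.eval_zero]
      rfl
    · intro s hs i hi h1 h2
      simp only [ForestAut.eval_succ _ T β hs, h1, h2]
      rfl
  beta_reduce
  rw [hM, hM', key [] T.nil_mem _ le_rfl]

/-- Closure under projection, by the powerset construction: the nondeterministic relabelling `R` is
applied to each node independently. -/
theorem proj {P : UTree A → (Node → B) → Prop} (hP : Recog P) (R : B → B → Prop)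
    (hR : ∀ b, R b b) :
    Recog fun T β => ∃ β' : Node → B, (∀ t, R (β t) (β' t)) ∧ P T β' := by
  classical
  obtain ⟨M, acc, hM⟩ := hP
  have := M.finite_H
  let N : ForestAut B := ⟨Set M.H, inferInstance, {M.init},
    fun X b Y => {h | ∃ x ∈ X, ∃ y ∈ Y, ∃ b', R b b' ∧ h = M.step x b' y}⟩
  refine ⟨N, fun b X => ∃ h ∈ (X : Set M.H), ∃ b', R b b' ∧ acc b' h, fun T β => ?_⟩
  have key : ∀ s ∈ T.dom, ∀ i ≤ T.childCount s, ∀ h,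
      h ∈ (N.eval T β s i : Set M.H) ↔
        ∃ β' : Node → B, (∀ t, R (β t) (β' t)) ∧ M.eval T β' s i = h := by
    refine T.forest_induction _ ?_ ?_
    · intro s hs h
      simp only [ForestAut.eval_zero]
      constructor
      · intro hh
        exact ⟨β, fun t => hR _, (Set.mem_singleton_iff.1 hh).symm⟩
      · rintro ⟨-, -, rfl⟩
        exact Set.mem_singleton _
    · intro s hs i hi h1 h2 h
      have hlt := (T.mem_dom_iff s i).1 hi
      rw [ForestAut.eval_succ _ T β hs]
      constructor
      · rintro ⟨x, hx, y, hy, b', hb', rfl⟩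
        obtain ⟨β₁, hβ₁, rfl⟩ := (h1 x).1 hx
        obtain ⟨β₂, hβ₂, rfl⟩ := (h2 y).1 hy
        -- glue the relabellings of the left forest, of the last root, and of its subforest
        let γ : Node → B := fun t =>
          if t = s ++ [i] then b' else if s ++ [i] <+: t then β₂ t else β₁ t
        refine ⟨γ, fun t => ?_, ?_⟩
        · simp only [γ]
          split_ifs with e1 e2
          · rw [e1]; exact hb'
          · exact hβ₂ t
          · exact hβ₁ t
        · rw [ForestAut.eval_succ _ T γ hs]
          have e0 : γ (s ++ [i]) = b' := by simp [γ]
          have e1 : M.eval T γ s i = M.eval T β₁ s i := by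
            refine M.eval_congr T s hs i hlt.le fun t ht hb => ?_
            have hnp := hb.not_prefix
            have hne : t ≠ s ++ [i] := by
              rintro rfl
              exact hnp List.prefix_rfl
            simp [γ, hnp, hne]
          have e2 : M.eval T γ (s ++ [i]) (T.childCount (s ++ [i])) =
              M.eval T β₂ (s ++ [i]) (T.childCount (s ++ [i])) := by
            refine M.eval_congr T _ hi _ le_rfl fun t ht hb => ?_
            have hp := (T.prefix_iff ht).2 (Or.inr hb)
            have hne : t ≠ s ++ [i] := by
              rintro rfl
              exact not_below_self _ _ hb
            simp only [γ, if_neg hne, if_pos hp]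
          rw [e0, e1, e2]
      · rintro ⟨β', hβ', rfl⟩
        rw [ForestAut.eval_succ _ T β' hs]
        exact ⟨_, (h1 _).2 ⟨β', hβ', rfl⟩, _, (h2 _).2 ⟨β', hβ', rfl⟩, _, hβ' _, rfl⟩
  constructor
  · rintro ⟨β', hβ', h⟩
    exact ⟨_, (key [] T.nil_mem _ le_rfl _).2 ⟨β', hβ', rfl⟩, _, hβ' [], (hM T β').1 h⟩
  · rintro ⟨h, hh, b', hb', ha⟩
    obtain ⟨β', hβ', rfl⟩ := (key [] T.nil_mem _ le_rfl _).1 hh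
    refine ⟨Function.update β' [] b', fun t => ?_, ?_⟩
    · rcases eq_or_ne t [] with rfl | ht
      · simpa using hb'
      · simpa [ht] using hβ' t
    · rw [hM]
      have : M.eval T (Function.update β' [] b') [] (T.childCount []) =
          M.eval T β' [] (T.childCount []) := by
        refine M.eval_congr T _ T.nil_mem _ le_rfl fun t ht hb => ?_
        have hne : t ≠ [] := by
          rintro rfl
          exact not_below_self _ _ hb
        simp [hne]
      rw [this]
      simpa using ha

theorem exists_node (p : B → Prop) :
    Recog fun (T : UTree A) (β : Node → B) => ∃ t ∈ T.dom, p (β t) := by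
  let N : ForestAut B := ⟨Prop, inferInstance, False, fun h b k => h ∨ p b ∨ k⟩
  refine ⟨N, fun b h => p b ∨ h, fun T β => ?_⟩
  have key : ∀ s ∈ T.dom, ∀ i ≤ T.childCount s,
      N.eval T β s i = ∃ t ∈ T.dom, Below s i t ∧ p (β t) := by
    refine T.forest_induction _ ?_ ?_
    · intro s hs
      simp [ForestAut.eval_zero, not_below_zero, N]
    · intro s hs i hi h1 h2
      rw [ForestAut.eval_succ _ T β hs, T.exists_below_succ hi fun t => p (β t), h1, h2]
  beta_reduce
  rw [T.exists_dom_iff fun t => p (β t), key [] T.nil_mem _ le_rfl]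

/-- The second component of the state remembers whether a node with property `q` was seen. -/
theorem exists_desc (p q : B → Prop) :
    Recog fun (T : UTree A) (β : Node → B) =>
      ∃ u ∈ T.dom, p (β u) ∧ ∃ t ∈ T.dom, u <+: t ∧ q (β t) := by
  let N : ForestAut B := ⟨Prop × Prop, inferInstance, (False, False),
    fun h b k => (h.1 ∨ (p b ∧ (q b ∨ k.2)) ∨ k.1, h.2 ∨ q b ∨ k.2)⟩
  refine ⟨N, fun b h => (p b ∧ (q b ∨ h.2)) ∨ h.1, fun T β => ?_⟩
  have key : ∀ s ∈ T.dom, ∀ i ≤ T.childCount s,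
      N.eval T β s i = (∃ u ∈ T.dom, Below s i u ∧ p (β u) ∧ ∃ t ∈ T.dom, u <+: t ∧ q (β t),
        ∃ t ∈ T.dom, Below s i t ∧ q (β t)) := by
    refine T.forest_induction _ ?_ ?_
    · intro s hs
      simp [ForestAut.eval_zero, not_below_zero, N]
    · intro s hs i hi h1 h2
      rw [ForestAut.eval_succ _ T β hs, T.exists_below_succ hi fun t => q (β t),
        T.exists_below_succ hi fun u => p (β u) ∧ ∃ t ∈ T.dom, u <+: t ∧ q (β t),
        T.exists_prefix_iff hi fun t => q (β t), h1, h2]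
  beta_reduce
  rw [T.exists_dom_iff fun u => p (β u) ∧ ∃ t ∈ T.dom, u <+: t ∧ q (β t),
    T.exists_prefix_iff T.nil_mem fun t => q (β t), key [] T.nil_mem _ le_rfl]

/-- The second component of the state remembers whether some root of the forest has property `p`. -/
theorem exists_sib (p q : B → Prop) :
    Recog fun (T : UTree A) (β : Node → B) =>
      ∃ t ∈ T.dom, q (β t) ∧ ∃ u i j, t = u ++ [j] ∧ i ≤ j ∧ p (β (u ++ [i])) := by
  let N : ForestAut B := ⟨Prop × Prop, inferInstance, (False, False),
    fun h b k => (h.1 ∨ (q b ∧ (h.2 ∨ p b)) ∨ k.1, h.2 ∨ p b)⟩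
  refine ⟨N, fun b h => h.1, fun T β => ?_⟩
  have key : ∀ s ∈ T.dom, ∀ i ≤ T.childCount s,
      N.eval T β s i = (∃ t ∈ T.dom, Below s i t ∧ q (β t) ∧
          ∃ u i j, t = u ++ [j] ∧ i ≤ j ∧ p (β (u ++ [i])),
        ∃ j < i, p (β (s ++ [j]))) := by
    refine T.forest_induction _ ?_ ?_
    · intro s hs
      simp [ForestAut.eval_zero, not_below_zero, N]
    · intro s hs i hi h1 h2
      have e1 : (∃ j < i + 1, p (β (s ++ [j]))) ↔ (∃ j < i, p (β (s ++ [j]))) ∨ p (β (s ++ [i])) := by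
        simp only [Nat.lt_succ_iff_lt_or_eq, or_and_right, exists_or, exists_eq_left]
      have e2 : (∃ u k j, s ++ [i] = u ++ [j] ∧ k ≤ j ∧ p (β (u ++ [k]))) ↔
          ∃ j < i + 1, p (β (s ++ [j])) := by
        constructor
        · rintro ⟨u, k, j, e, hk, hp⟩
          obtain ⟨rfl, rfl⟩ : s = u ∧ i = j := by simpa using List.append_inj' e rfl
          exact ⟨k, by omega, hp⟩
        · rintro ⟨k, hk, hp⟩
          exact ⟨s, k, i, rfl, by omega, hp⟩
      rw [ForestAut.eval_succ _ T β hs, T.exists_below_succ hi fun t => q (β t) ∧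
          ∃ u i j, t = u ++ [j] ∧ i ≤ j ∧ p (β (u ++ [i])), e2, e1, h1, h2]
  beta_reduce
  rw [T.exists_dom_iff fun t => q (β t) ∧
    ∃ u i j, t = u ++ [j] ∧ i ≤ j ∧ p (β (u ++ [i])), key [] T.nil_mem _ le_rfl]
  simp

/-- The second component of the state remembers whether a node with property `p` was seen. -/
theorem atMostOne (p : B → Prop) :
    Recog fun (T : UTree A) (β : Node → B) =>
      ∀ u ∈ T.dom, ∀ t ∈ T.dom, p (β u) → p (β t) → u = t := by
  let N : ForestAut B := ⟨Prop × Prop, inferInstance, (True, False),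
    fun h b k => (h.1 ∧ k.1 ∧ ¬ (h.2 ∧ k.2) ∧ ¬ (h.2 ∧ p b) ∧ ¬ (k.2 ∧ p b), h.2 ∨ p b ∨ k.2)⟩
  refine ⟨N, fun b h => h.1 ∧ ¬ (h.2 ∧ p b), fun T β => ?_⟩
  have key : ∀ s ∈ T.dom, ∀ i ≤ T.childCount s,
      N.eval T β s i = (∀ u ∈ T.dom, ∀ t ∈ T.dom, Below s i u → Below s i t →
        p (β u) → p (β t) → u = t, ∃ t ∈ T.dom, Below s i t ∧ p (β t)) := by
    refine T.forest_induction _ ?_ ?_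
    · intro s hs
      simp [ForestAut.eval_zero, not_below_zero, N]
    · intro s hs i hi h1 h2
      rw [ForestAut.eval_succ _ T β hs, T.exists_below_succ hi fun t => p (β t), h1, h2]
      refine Prod.ext (propext ?_) rfl
      have b1 : ∀ t ∈ T.dom, Below s i t → Below s (i + 1) t := fun t ht h =>
        (T.below_succ ht).2 (Or.inl h)
      have b2 : ∀ t ∈ T.dom, Below (s ++ [i]) (T.childCount (s ++ [i])) t → Below s (i + 1) t :=
        fun t ht h => (T.below_succ ht).2 (Or.inr (Or.inr h))
      have b3 : Below s (i + 1) (s ++ [i]) := (T.below_succ hi).2 (Or.inr (Or.inl rfl))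
      have d1 : ∀ t ∈ T.dom, Below s i t → ¬ Below (s ++ [i]) (T.childCount (s ++ [i])) t :=
        fun t ht h h' => h.not_prefix ((T.prefix_iff ht).2 (Or.inr h'))
      have d2 : ¬ Below s i (s ++ [i]) := fun h => h.not_prefix List.prefix_rfl
      constructor
      · rintro ⟨c1, c2, c3, c4, c5⟩ u hu t ht bu bt pu pt
        rcases (T.below_succ hu).1 bu with bu | rfl | bu <;>
          rcases (T.below_succ ht).1 bt with bt | rfl | bt
        · exact c1 u hu t ht bu bt pu pt
        · exact absurd ⟨⟨u, hu, bu, pu⟩, pt⟩ c4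
        · exact absurd ⟨⟨u, hu, bu, pu⟩, ⟨t, ht, bt, pt⟩⟩ c3
        · exact absurd ⟨⟨t, ht, bt, pt⟩, pu⟩ c4
        · rfl
        · exact absurd ⟨⟨t, ht, bt, pt⟩, pu⟩ c5
        · exact absurd ⟨⟨t, ht, bt, pt⟩, ⟨u, hu, bu, pu⟩⟩ c3
        · exact absurd ⟨⟨u, hu, bu, pu⟩, pt⟩ c5
        · exact c2 u hu t ht bu bt pu pt
      · intro h
        refine ⟨fun u hu t ht bu bt => h u hu t ht (b1 u hu bu) (b1 t ht bt),
          fun u hu t ht bu bt => h u hu t ht (b2 u hu bu) (b2 t ht bt), ?_, ?_, ?_⟩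
        · rintro ⟨⟨u, hu, bu, pu⟩, ⟨t, ht, bt, pt⟩⟩
          obtain rfl := h u hu t ht (b1 u hu bu) (b2 t ht bt) pu pt
          exact d1 u hu bu bt
        · rintro ⟨⟨u, hu, bu, pu⟩, pt⟩
          obtain rfl := h u hu _ hi (b1 u hu bu) b3 pu pt
          exact d2 bu
        · rintro ⟨⟨u, hu, bu, pu⟩, pt⟩
          obtain rfl := h u hu _ hi (b2 u hu bu) b3 pu pt
          exact not_below_self _ _ bu
  rw [key [] T.nil_mem _ le_rfl]
  have hb : ∀ t ∈ T.dom, t = [] ∨ Below [] (T.childCount []) t := fun t ht =>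
    (T.prefix_iff ht).1 List.nil_prefix
  constructor
  · intro h
    refine ⟨fun u hu t ht _ _ => h u hu t ht, ?_⟩
    rintro ⟨⟨u, hu, bu, pu⟩, pt⟩
    obtain rfl := h u hu _ T.nil_mem pu pt
    exact not_below_self _ _ bu
  · rintro ⟨h1, h2⟩ u hu t ht pu pt
    rcases hb u hu with rfl | bu <;> rcases hb t ht with rfl | bt
    · rfl
    · exact absurd ⟨⟨t, ht, bt, pt⟩, pu⟩ h2
    · exact absurd ⟨⟨u, hu, bu, pu⟩, pt⟩ h2
    · exact h1 u hu t ht bu bt pu pt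

end Recog

end Automata

/-! ### From MSO formulas to query automata -/

section MSOToAutomata

variable {A : Type}

/-- Labels that also record which first-order variables are placed at a node and which set
variables contain it. -/
abbrev VLabel (A : Type) : Type := A × Set ℕ × Set ℕ

/-- The labelling of `T` that codes the valuations `v` and `V`. -/
def vlabel (T : UTree A) (v : ℕ → Node) (V : ℕ → Set Node) : Node → VLabel A :=
  fun t => (T.label t, {x | v x = t}, {X | t ∈ V X})

/-- Every MSO formula is recognizable on trees labelled by valuations. -/
theorem recog_of_mso (φ : MSO A) : ∃ P : UTree A → (Node → VLabel A) → Prop, Recog P ∧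
    ∀ T v V, (∀ x, v x ∈ T.dom) → (φ.Sat T v V ↔ P T (vlabel T v V)) := by
  induction φ with
  | eq x y =>
    refine ⟨_, Recog.exists_node fun b => x ∈ b.2.1 ∧ y ∈ b.2.1, fun T v V hv => ?_⟩
    constructor
    · intro h
      exact ⟨v x, hv x, rfl, Eq.symm h⟩
    · rintro ⟨t, -, h1, h2⟩
      exact Eq.trans h1 (Eq.symm h2)
  | desc x y =>
    refine ⟨_, Recog.exists_desc (fun b => x ∈ b.2.1) (fun b => y ∈ b.2.1), fun T v V hv => ?_⟩
    constructor
    · rintro ⟨-, -, h⟩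
      exact ⟨v x, hv x, rfl, v y, hv y, h, rfl⟩
    · rintro ⟨u, hu, rfl, t, ht, h, rfl⟩
      exact ⟨hu, ht, h⟩
  | sib x y =>
    refine ⟨_, Recog.exists_sib (fun b => x ∈ b.2.1) (fun b => y ∈ b.2.1), fun T v V hv => ?_⟩
    constructor
    · rintro ⟨-, -, u, i, j, h1, h2, hij⟩
      exact ⟨v y, hv y, rfl, u, i, j, h2, hij, h1⟩
    · rintro ⟨t, ht, rfl, u, i, j, h2, hij, h1⟩
      exact ⟨hv x, ht, u, i, j, h1, h2, hij⟩
  | lab a x =>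
    refine ⟨_, Recog.exists_node fun b => b.1 = a ∧ x ∈ b.2.1, fun T v V hv => ?_⟩
    constructor
    · rintro ⟨h, h'⟩
      exact ⟨v x, h, h', rfl⟩
    · rintro ⟨t, h, h', rfl⟩
      exact ⟨h, h'⟩
  | mem X x =>
    refine ⟨_, Recog.exists_node fun b => X ∈ b.2.2 ∧ x ∈ b.2.1, fun T v V hv => ?_⟩
    constructor
    · intro h
      exact ⟨v x, hv x, h, rfl⟩
    · rintro ⟨t, -, h', rfl⟩
      exact h'
  | not φ ih =>
    obtain ⟨P, hP, h⟩ := ih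
    exact ⟨_, hP.not, fun T v V hv => not_congr (h T v V hv)⟩
  | and φ ψ ih₁ ih₂ =>
    obtain ⟨P, hP, h⟩ := ih₁
    obtain ⟨P', hP', h'⟩ := ih₂
    exact ⟨_, hP.and hP', fun T v V hv => and_congr (h T v V hv) (h' T v V hv)⟩
  | exFO n φ ih =>
    obtain ⟨P, hP, h⟩ := ih
    refine ⟨_, ((hP.and (Recog.exists_node fun b => n ∈ b.2.1)).and
      (Recog.atMostOne fun b => n ∈ b.2.1)).proj
      (fun b b' => b'.1 = b.1 ∧ b'.2.2 = b.2.2 ∧ ∀ x, x ≠ n → (x ∈ b'.2.1 ↔ x ∈ b.2.1))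
      (fun b => ⟨rfl, rfl, fun x _ => Iff.rfl⟩), fun T v V hv => ?_⟩
    have hup : ∀ s ∈ T.dom, ∀ x, Function.update v n s x ∈ T.dom := by
      intro s hs x
      rcases eq_or_ne x n with rfl | hx
      · simpa using hs
      · simpa [hx] using hv x
    have hn : ∀ s t, n ∈ (vlabel T (Function.update v n s) V t).2.1 ↔ s = t := fun s t => by
      simp [vlabel]
    constructor
    · rintro ⟨s, hs, hφ⟩
      refine ⟨vlabel T (Function.update v n s) V, fun t => ⟨rfl, rfl, fun x hx => ?_⟩,
        ⟨(h T _ V (hup s hs)).1 hφ, s, hs, (hn s s).2 rfl⟩, fun u _ t _ hu ht => ?_⟩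
      · simp [vlabel, hx]
      · exact ((hn s u).1 hu).symm.trans ((hn s t).1 ht)
    · rintro ⟨β', hβ', ⟨hP', s, hs, hns⟩, huniq⟩
      refine ⟨s, hs, (h T _ V (hup s hs)).2 ((hP.congr T fun t ht => ?_).1 hP')⟩
      obtain ⟨h1, h2, h3⟩ := hβ' t
      refine Prod.ext h1 (Prod.ext (Set.ext fun x => ?_) h2)
      rcases eq_or_ne x n with rfl | hx
      · rw [hn]
        exact ⟨fun hx => huniq s hs t ht hns hx, fun e => e ▸ hns⟩
      · rw [h3 x hx]
        simp [vlabel, hx]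
  | exSO n φ ih =>
    obtain ⟨P, hP, h⟩ := ih
    refine ⟨_, hP.proj
      (fun b b' => b'.1 = b.1 ∧ b'.2.1 = b.2.1 ∧ ∀ x, x ≠ n → (x ∈ b'.2.2 ↔ x ∈ b.2.2))
      (fun b => ⟨rfl, rfl, fun x _ => Iff.rfl⟩), fun T v V hv => ?_⟩
    constructor
    · rintro ⟨S, hS, hφ⟩
      refine ⟨vlabel T v (Function.update V n S), fun t => ⟨rfl, rfl, fun x hx => ?_⟩,
        (h T v _ hv).1 hφ⟩
      simp [vlabel, hx]
    · rintro ⟨β', hβ', hP'⟩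
      refine ⟨{t | t ∈ T.dom ∧ n ∈ (β' t).2.2}, fun t ht => ht.1,
        (h T v _ hv).2 ((hP.congr T fun t ht => ?_).1 hP')⟩
      obtain ⟨h1, h2, h3⟩ := hβ' t
      refine Prod.ext h1 (Prod.ext h2 (Set.ext fun x => ?_))
      rcases eq_or_ne x n with rfl | hx
      · simp [vlabel, ht]
      · rw [h3 x hx]
        simp [vlabel, hx]

/-- The label of a node other than the root when only the variable `0` may be placed there, as told
by `m`, and all set variables are empty. -/
def innerLabel (a : A) (m : Bool) : VLabel A := (a, {x | x = 0 ∧ m = true}, ∅)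

/-- The label of the root when it carries all first-order variables other than `0`. -/
def rootLabel (a : A) (m : Bool) : VLabel A := (a, {x | x = 0 → m = true}, ∅)

/-- The labelling in which `m` marks the positions of variable `0`. -/
def markLabel (T : UTree A) (m : Node → Bool) (t : Node) : VLabel A :=
  if t = [] then rootLabel (T.label t) (m t) else innerLabel (T.label t) (m t)

theorem markLabel_append (T : UTree A) (m : Node → Bool) (s : Node) (i : ℕ) :
    markLabel T m (s ++ [i]) = innerLabel (T.label (s ++ [i])) (m (s ++ [i])) := by
  simp [markLabel]

theorem zero_mem_markLabel (T : UTree A) (m : Node → Bool) (t : Node) :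
    0 ∈ (markLabel T m t).2.1 ↔ m t = true := by
  rw [markLabel]
  split_ifs <;> simp [rootLabel, innerLabel]

theorem markLabel_eq (T : UTree A) (s t : Node) :
    markLabel T (fun u => decide (u = s)) t =
      vlabel T (Function.update (fun _ => []) 0 s) (fun _ => ∅) t := by
  have h : ∀ x, Function.update (fun _ => ([] : Node)) 0 s x = if x = 0 then s else [] := fun x => by
    simp [Function.update_apply]
  rw [markLabel]
  split_ifs with ht
  · subst ht
    refine Prod.ext rfl (Prod.ext (Set.ext fun x => ?_) (Set.ext fun x => Iff.rfl))
    change (x = 0 → decide ([] = s) = true) ↔ Function.update (fun _ => ([] : Node)) 0 s x = []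
    rw [h]
    split_ifs with hx <;> simp [hx, eq_comm]
  · refine Prod.ext rfl (Prod.ext (Set.ext fun x => ?_) (Set.ext fun x => Iff.rfl))
    change (x = 0 ∧ decide (t = s) = true) ↔ Function.update (fun _ => ([] : Node)) 0 s x = t
    rw [h]
    split_ifs with hx
    · simp [hx, eq_comm]
    · simp [hx, Ne.symm ht]

theorem map_childrenList {R : Type} (T : UTree A) (ρ : Node → R) (s : Node) :
    (T.childrenList s).map ρ = (List.range (T.childCount s)).map fun i => ρ (s ++ [i]) := by
  simp [UTree.childrenList]

theorem foldl_range_succ {R H : Type} (step : H → R → H) (h₀ : H) (f : ℕ → R) (i : ℕ) :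
    ((List.range (i + 1)).map f).foldl step h₀ =
      step (((List.range i).map f).foldl step h₀) (f i) := by
  simp [List.range_succ]

/-- A recognizable condition on marked trees is checked by a NUTA that guesses the marks. Its states
are triples (state of the forest of children, label, mark). -/
theorem exists_qaut_of_recog [Finite A] {P : UTree A → (Node → VLabel A) → Prop} (hP : Recog P) :
    ∃ QA : QAut A, ∀ T s, s ∈ QA.existsSem T ↔
      s ∈ T.dom ∧ ∃ m : Node → Bool, P T (markLabel T m) ∧ m s = true := by
  classical
  obtain ⟨M, acc, hM⟩ := hP
  have := M.finite_H
  let stepQ : M.H → M.H × A × Bool → M.H := fun g q => M.step g (innerLabel q.2.1 q.2.2) q.1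
  choose rex hrex using fun h => exists_regex stepQ M.init h
  let N : NUTA A :=
    { Q := M.H × A × Bool
      fintype_Q := Fintype.ofFinite _
      F := {q | acc (rootLabel q.2.1 q.2.2) q.1}
      δ := fun q a => if q.2.1 = a then rex q.1 else 0 }
  have hδ : ∀ (q : M.H × A × Bool) a w, w ∈ (N.δ q a).matches' ↔
      q.2.1 = a ∧ w.foldl stepQ M.init = q.1 := by
    intro q a w
    by_cases h : q.2.1 = a
    · simp only [N, if_pos h, hrex]
      tauto
    · simp only [N, if_neg h, RegularExpression.matches'_zero]
      exact ⟨fun hw => absurd hw (Language.notMem_zero _), fun hw => absurd hw.1 h⟩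
  refine ⟨⟨N, {x | x.1.2.2 = true}⟩, fun T s => and_congr_right fun hs => ?_⟩
  constructor
  · rintro ⟨ρ, hrun, hF, hS⟩
    have hrun' : ∀ u ∈ T.dom, (ρ u).2.1 = T.label u ∧
        ((List.range (T.childCount u)).map fun i => ρ (u ++ [i])).foldl stepQ M.init = (ρ u).1 := by
      intro u hu
      have := hrun u hu
      rwa [map_childrenList, hδ] at this
    let m : Node → Bool := fun t => (ρ t).2.2
    have key : ∀ u ∈ T.dom, ∀ i ≤ T.childCount u,
        ((List.range i).map fun i => ρ (u ++ [i])).foldl stepQ M.init =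
          M.eval T (markLabel T m) u i := by
      refine T.forest_induction _ ?_ ?_
      · intro u hu
        rw [ForestAut.eval_zero]
        rfl
      · intro u hu i hi h1 h2
        rw [foldl_range_succ, h1, M.eval_succ T _ hu, ← h2, (hrun' _ hi).2, markLabel_append,
          ← (hrun' _ hi).1]
    refine ⟨m, ?_, hS⟩
    rw [hM, ← key [] T.nil_mem _ le_rfl, (hrun' [] T.nil_mem).2]
    have : markLabel T m [] = rootLabel (ρ []).2.1 (ρ []).2.2 := by
      rw [(hrun' [] T.nil_mem).1]
      simp [markLabel, m]
    rw [this]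
    exact hF
  · rintro ⟨m, hm, hs⟩
    let ρ : Node → M.H × A × Bool := fun t =>
      (M.eval T (markLabel T m) t (T.childCount t), T.label t, m t)
    refine ⟨ρ, fun u hu => ?_, ?_, hs⟩
    · rw [map_childrenList, hδ]
      refine ⟨rfl, ?_⟩
      have : ∀ i, ((List.range i).map fun i => ρ (u ++ [i])).foldl stepQ M.init =
          M.eval T (markLabel T m) u i := by
        intro i
        induction i with
        | zero => rw [ForestAut.eval_zero]; rfl
        | succ i ih => rw [foldl_range_succ, ih, M.eval_succ T _ hu, markLabel_append]
      exact this _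
    · have h := (hM T _).1 hm
      have e : markLabel T m [] = rootLabel (T.label []) (m []) := by simp [markLabel]
      rw [e] at h
      exact h

theorem exists_qaut_of_mso [Finite A] {Q : UTree A → Set Node} (hQ : ∀ T, Q T ⊆ ↑T.dom)
    {φ : MSO A} (hφ : φ.DefinesU Q) : ∃ QA : QAut A, ∀ T, Q T = QA.existsSem T := by
  obtain ⟨P, hP, h⟩ := recog_of_mso φ
  obtain ⟨QA, hQA⟩ := exists_qaut_of_recog (hP.and (Recog.atMostOne fun b => 0 ∈ b.2.1))
  refine ⟨QA, fun T => Set.ext fun s => ?_⟩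
  rw [hQA]
  have hv : ∀ s ∈ T.dom, ∀ x, Function.update (fun _ : ℕ => ([] : Node)) 0 s x ∈ T.dom := by
    intro s hs x
    rw [Function.update_apply]
    split_ifs
    exacts [hs, T.nil_mem]
  constructor
  · intro hs
    have hd : s ∈ T.dom := hQ T hs
    refine ⟨hd, fun u => decide (u = s), ⟨?_, ?_⟩, by simp⟩
    · have := (h T _ _ (hv s hd)).1 ((hφ T (fun _ => []) (fun _ => ∅) s hd).1 hs)
      rwa [← funext fun t => markLabel_eq T s t] at this
    · intro u _ t _ hu ht
      rw [zero_mem_markLabel] at hu ht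
      simp only [decide_eq_true_eq] at hu ht
      rw [hu, ht]
  · rintro ⟨hd, m, ⟨hm, huniq⟩, hs⟩
    refine (hφ T (fun _ => []) (fun _ => ∅) s hd).2 ((h T _ _ (hv s hd)).2 ?_)
    refine (hP.congr T fun t ht => ?_).1 hm
    rw [← markLabel_eq]
    have : m t = decide (t = s) := by
      by_cases e : t = s
      · simp [e, hs]
      · have : ¬ m t = true := fun hmt => e (huniq t ht s hd
          ((zero_mem_markLabel T m t).2 hmt) ((zero_mem_markLabel T m s).2 hs))
        simp [e, this]
    simp only [markLabel, this]

end MSOToAutomata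

/-! ### From query automata to MSO formulas -/

section AutomataToMSO

variable {A : Type}

/-- A property of a tree together with valuations that some MSO formula expresses. -/
def MDef (P : UTree A → (ℕ → Node) → (ℕ → Set Node) → Prop) : Prop :=
  ∃ φ : MSO A, ∀ T v V, P T v V ↔ φ.Sat T v V

namespace MDef

variable {P P' : UTree A → (ℕ → Node) → (ℕ → Set Node) → Prop}

theorem congr (hP : MDef P) (h : ∀ T v V, P' T v V ↔ P T v V) : MDef P' := by
  obtain ⟨φ, hφ⟩ := hP
  exact ⟨φ, fun T v V => (h T v V).trans (hφ T v V)⟩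

theorem eq (x y : ℕ) : MDef fun (_ : UTree A) v _ => v x = v y :=
  ⟨.eq x y, fun _ _ _ => Iff.rfl⟩

theorem desc (x y : ℕ) : MDef fun (T : UTree A) v _ => T.descR (v x) (v y) :=
  ⟨.desc x y, fun _ _ _ => Iff.rfl⟩

theorem sib (x y : ℕ) : MDef fun (T : UTree A) v _ => T.sibR (v x) (v y) :=
  ⟨.sib x y, fun _ _ _ => Iff.rfl⟩

theorem lab (a : A) (x : ℕ) : MDef fun (T : UTree A) v _ => v x ∈ T.dom ∧ T.label (v x) = a :=
  ⟨.lab a x, fun _ _ _ => Iff.rfl⟩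

theorem mem (X x : ℕ) : MDef fun (_ : UTree A) v V => v x ∈ V X :=
  ⟨.mem X x, fun _ _ _ => Iff.rfl⟩

theorem not (hP : MDef P) : MDef fun T v V => ¬ P T v V := by
  obtain ⟨φ, hφ⟩ := hP
  exact ⟨.not φ, fun T v V => not_congr (hφ T v V)⟩

theorem and (hP : MDef P) (hP' : MDef P') : MDef fun T v V => P T v V ∧ P' T v V := by
  obtain ⟨φ, hφ⟩ := hP
  obtain ⟨φ', hφ'⟩ := hP'
  exact ⟨.and φ φ', fun T v V => and_congr (hφ T v V) (hφ' T v V)⟩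

theorem or (hP : MDef P) (hP' : MDef P') : MDef fun T v V => P T v V ∨ P' T v V :=
  (hP.not.and hP'.not).not.congr fun _ _ _ => by tauto

theorem imp (hP : MDef P) (hP' : MDef P') : MDef fun T v V => P T v V → P' T v V :=
  (hP.and hP'.not).not.congr fun _ _ _ => by tauto

theorem const (p : Prop) : MDef fun (_ : UTree A) _ _ => p := by
  by_cases hp : p
  · exact (eq 0 0).congr fun _ _ _ => by simp [hp]
  · exact (eq 0 0).not.congr fun _ _ _ => by simp [hp]

theorem all (n : ℕ) (hP : MDef P) :
    MDef fun T v V => ∀ s ∈ T.dom, P T (Function.update v n s) V := by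
  obtain ⟨φ, hφ⟩ := hP.not
  refine MDef.congr (MDef.not (P := fun T v V => ∃ s ∈ T.dom, ¬ P T (Function.update v n s) V)
    ⟨.exFO n φ, fun T v V => ?_⟩) fun T v V => by push Not; rfl
  exact exists_congr fun s => and_congr_right fun _ => hφ T _ V

theorem forall_finite {ι : Type} [Finite ι] {P : ι → UTree A → (ℕ → Node) → (ℕ → Set Node) → Prop}
    (hP : ∀ i, MDef (P i)) : MDef fun T v V => ∀ i, P i T v V := by
  classical
  cases nonempty_fintype ι
  have : ∀ s : Finset ι, MDef fun T v V => ∀ i ∈ s, P i T v V := by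
    intro s
    induction s using Finset.induction_on with
    | empty => exact (const True).congr fun _ _ _ => by simp
    | insert i s _ ih => exact ((hP i).and ih).congr fun _ _ _ => by simp
  exact (this Finset.univ).congr fun _ _ _ => by simp

theorem exists_finite {ι : Type} [Finite ι] {P : ι → UTree A → (ℕ → Node) → (ℕ → Set Node) → Prop}
    (hP : ∀ i, MDef (P i)) : MDef fun T v V => ∃ i, P i T v V :=
  (forall_finite fun i => (hP i).not).not.congr fun _ _ _ => by push Not; rfl

/-- Existential quantification over the block of set variables `0, …, k - 1`. -/
theorem exists_sets (hP : MDef P) (k : ℕ) :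
    MDef fun T v V => ∃ V' : ℕ → Set Node, (∀ i < k, V' i ⊆ ↑T.dom) ∧
      (∀ i, k ≤ i → V' i = V i) ∧ P T v V' := by
  induction k with
  | zero =>
    refine hP.congr fun T v V => ?_
    constructor
    · rintro ⟨V', -, h, hP⟩
      rwa [← show V' = V from funext fun i => h i (Nat.zero_le i)]
    · intro h
      exact ⟨V, by simp, fun _ _ => rfl, h⟩
  | succ k ih =>
    obtain ⟨φ, hφ⟩ := ih
    refine ⟨.exSO k φ, fun T v V => ?_⟩
    have e : (MSO.exSO k φ).Sat T v V ↔
        ∃ S : Set Node, S ⊆ ↑T.dom ∧ φ.Sat T v (Function.update V k S) := Iff.rfl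
    simp only [e, ← hφ]
    constructor
    · rintro ⟨V', h1, h2, h3⟩
      refine ⟨V' k, h1 k (by omega), V', fun i hi => h1 i (by omega), fun i hi => ?_, h3⟩
      rcases hi.eq_or_lt with rfl | hi
      · simp
      · rw [Function.update_of_ne (by omega)]
        exact h2 i hi
    · rintro ⟨S, hS, V', h1, h2, h3⟩
      refine ⟨V', fun i hi => ?_, fun i hi => ?_, h3⟩
      · rcases Nat.lt_succ_iff_lt_or_eq.1 hi with hi | rfl
        · exact h1 i hi
        · rw [h2 i le_rfl]
          simpa using hS
      · rw [h2 i (by omega), Function.update_of_ne (by omega)]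

end MDef

theorem childR_iff (T : UTree A) (x y : Node) : T.childR x y ↔
    T.descR x y ∧ ¬ x = y ∧ ∀ z ∈ T.dom, T.descR x z → T.descR z y → z = x ∨ z = y := by
  constructor
  · rintro ⟨hx, hy, i, rfl⟩
    refine ⟨⟨hx, hy, List.prefix_append _ _⟩, by simp, ?_⟩
    rintro z hz ⟨-, -, w, rfl⟩ ⟨-, -, h⟩
    rw [List.prefix_append_right_inj] at h
    rcases w with _ | ⟨j, w⟩
    · simp
    · right
      rw [h.eq_of_length (le_antisymm h.length_le (by simp))]
  · rintro ⟨⟨hx, hy, w, rfl⟩, hne, h⟩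
    rcases w with _ | ⟨i, w⟩
    · simp at hne
    · have hp : x ++ [i] <+: x ++ i :: w := ⟨w, by simp⟩
      have hz := T.prefix_closed hy hp
      rcases h _ hz ⟨hx, hz, List.prefix_append _ _⟩ ⟨hz, hy, hp⟩ with e | e
      · simp at e
      · exact ⟨hx, hy, i, e.symm⟩

theorem firstChildR_iff (T : UTree A) (x y : Node) : T.firstChildR x y ↔
    T.childR x y ∧ ∀ z ∈ T.dom, T.sibR z y → z = y := by
  constructor
  · rintro ⟨hx, hy, rfl⟩
    refine ⟨⟨hx, hy, 0, rfl⟩, ?_⟩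
    rintro z hz ⟨-, -, u, i, j, rfl, e, hij⟩
    obtain ⟨rfl, rfl⟩ : x = u ∧ 0 = j := by simpa using List.append_inj' e rfl
    rw [Nat.le_zero.1 hij]
  · rintro ⟨⟨hx, hy, i, rfl⟩, h⟩
    refine ⟨hx, hy, ?_⟩
    rcases Nat.eq_zero_or_pos i with rfl | hi
    · rfl
    · have hz := T.sib_closed hy hi
      exact (h _ hz ⟨hz, hy, x, 0, i, rfl, rfl, hi.le⟩).symm

/-- `y` is the last child of `x`. -/
def lastChildR (T : UTree A) (x y : Node) : Prop :=
  x ∈ T.dom ∧ y ∈ T.dom ∧ ∃ i, y = x ++ [i] ∧ x ++ [i + 1] ∉ T.dom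

theorem lastChildR_iff (T : UTree A) (x y : Node) : lastChildR T x y ↔
    T.childR x y ∧ ∀ z ∈ T.dom, T.sibR y z → z = y := by
  constructor
  · rintro ⟨hx, hy, i, rfl, hi⟩
    refine ⟨⟨hx, hy, i, rfl⟩, ?_⟩
    rintro z hz ⟨-, -, u, j, k, e, rfl, hjk⟩
    obtain ⟨rfl, rfl⟩ : x = u ∧ i = j := by simpa using List.append_inj' e rfl
    rcases hjk.eq_or_lt with rfl | hlt
    · rfl
    · rw [T.mem_dom_iff] at hi hz
      omega
  · rintro ⟨⟨hx, hy, i, rfl⟩, h⟩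
    refine ⟨hx, hy, i, rfl, fun hz => ?_⟩
    have := h _ hz ⟨hy, hz, x, i, i + 1, rfl, rfl, by omega⟩
    simp at this

theorem nsR_iff (T : UTree A) (x y : Node) : T.nsR x y ↔
    T.sibR x y ∧ ¬ x = y ∧ ∀ z ∈ T.dom, T.sibR x z → T.sibR z y → z = x ∨ z = y := by
  constructor
  · rintro ⟨hx, hy, u, i, rfl, rfl⟩
    refine ⟨⟨hx, hy, u, i, i + 1, rfl, rfl, by omega⟩, by simp, ?_⟩
    rintro z hz ⟨-, -, u', j, k, e, rfl, hjk⟩ ⟨-, -, u'', j', k', e', e'', hjk'⟩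
    obtain ⟨rfl, rfl⟩ : u = u' ∧ i = j := by simpa using List.append_inj' e rfl
    obtain ⟨rfl, rfl⟩ : u = u'' ∧ k = j' := by simpa using List.append_inj' e' rfl
    have : i + 1 = k' := by simpa using e''
    have : k = i ∨ k = i + 1 := by omega
    rcases this with rfl | rfl <;> simp
  · rintro ⟨⟨hx, hy, u, i, j, rfl, rfl, hij⟩, hne, h⟩
    have hlt : i < j := lt_of_le_of_ne hij (by rintro rfl; exact hne rfl)
    have hz : u ++ [i + 1] ∈ T.dom := by
      rw [T.mem_dom_iff] at hy ⊢
      omega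
    rcases h _ hz ⟨hx, hz, u, i, i + 1, rfl, rfl, by omega⟩
      ⟨hz, hy, u, i + 1, j, rfl, rfl, hlt⟩ with e | e
    · simp at e
    · exact ⟨hx, hy, u, i, rfl, e.symm⟩

theorem isLeaf_iff (T : UTree A) {x : Node} (hx : x ∈ T.dom) : T.isLeaf x ↔
    ∀ z ∈ T.dom, T.descR x z → z = x := by
  constructor
  · rintro ⟨-, h⟩ z hz ⟨-, -, w, rfl⟩
    rcases w with _ | ⟨i, w⟩
    · simp
    · exact absurd (T.prefix_closed hz ⟨w, by simp⟩) (h i)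
  · intro h
    refine ⟨hx, fun i hi => ?_⟩
    have := h _ hi ⟨hx, hi, List.prefix_append _ _⟩
    simp at this

theorem root_iff (T : UTree A) {x : Node} (hx : x ∈ T.dom) : x = [] ↔
    ∀ z ∈ T.dom, T.descR z x → z = x := by
  constructor
  · rintro rfl z hz ⟨-, -, h⟩
    exact List.prefix_nil.1 h
  · intro h
    exact (h [] T.nil_mem ⟨T.nil_mem, hx, List.nil_prefix⟩).symm

section Definability

theorem MDef.childR : MDef fun (T : UTree A) v _ => T.childR (v 1) (v 2) :=
  ((MDef.desc 1 2).and ((MDef.eq 1 2).not.and (MDef.all 3 ((MDef.desc 1 3).imp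
    ((MDef.desc 3 2).imp ((MDef.eq 3 1).or (MDef.eq 3 2))))))).congr
    fun T v _ => by simp [childR_iff]

theorem MDef.firstChildR : MDef fun (T : UTree A) v _ => T.firstChildR (v 1) (v 2) :=
  (MDef.childR.and (MDef.all 3 ((MDef.sib 3 2).imp (MDef.eq 3 2)))).congr
    fun T v _ => by simp [firstChildR_iff]

theorem MDef.lastChildR : MDef fun (T : UTree A) v _ => lastChildR T (v 1) (v 2) :=
  (MDef.childR.and (MDef.all 3 ((MDef.sib 2 3).imp (MDef.eq 3 2)))).congr
    fun T v _ => by simp [lastChildR_iff]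

theorem MDef.nsR : MDef fun (T : UTree A) v _ => T.nsR (v 1) (v 2) :=
  ((MDef.sib 1 2).and ((MDef.eq 1 2).not.and (MDef.all 3 ((MDef.sib 1 3).imp
    ((MDef.sib 3 2).imp ((MDef.eq 3 1).or (MDef.eq 3 2))))))).congr
    fun T v _ => by simp [nsR_iff]

variable {R : Type} [Finite R] [Finite A] (idx : R → ℕ)

/-- A condition on the labels of all pairs of nodes in the relation `Rel`, where the sets
`V (idx r)` code a labelling by elements `r : R`. -/
theorem MDef.binary {Rel : UTree A → Node → Node → Prop}
    (h : MDef fun (T : UTree A) v _ => Rel T (v 1) (v 2)) (K : R → A → R → Prop) :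
    MDef fun (T : UTree A) _ V => ∀ x ∈ T.dom, ∀ y ∈ T.dom, Rel T x y →
      ∀ p a r, x ∈ V (idx p) → T.label x = a → y ∈ V (idx r) → K p a r := by
  refine (MDef.all 1 (MDef.all 2 (h.imp (MDef.forall_finite fun p => MDef.forall_finite fun a =>
    MDef.forall_finite fun r => (MDef.mem (idx p) 1).imp ((MDef.lab a 1).imp
      ((MDef.mem (idx r) 2).imp (MDef.const (K p a r)))))))).congr fun T v V => ?_
  refine forall₂_congr fun x hx => forall₂_congr fun y hy => ?_
  simp [hx]

theorem MDef.unary {U : UTree A → Node → Prop}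
    (h : MDef fun (T : UTree A) v _ => v 1 ∈ T.dom → U T (v 1)) (K : R → A → Prop) :
    MDef fun (T : UTree A) _ V => ∀ x ∈ T.dom, U T x →
      ∀ p a, x ∈ V (idx p) → T.label x = a → K p a := by
  refine (MDef.all 1 (h.imp (MDef.forall_finite fun p => MDef.forall_finite fun a =>
    (MDef.mem (idx p) 1).imp ((MDef.lab a 1).imp (MDef.const (K p a)))))).congr fun T v V => ?_
  refine forall₂_congr fun x hx => ?_
  simp [hx]

end Definability


theorem MDef.isLeaf : MDef fun (T : UTree A) v _ => v 1 ∈ T.dom → T.isLeaf (v 1) :=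
  ((MDef.desc 1 1).imp (MDef.all 3 ((MDef.desc 1 3).imp (MDef.eq 3 1)))).congr fun T v _ => by
    have e : T.descR (v 1) (v 1) ↔ v 1 ∈ T.dom :=
      ⟨fun h => h.1, fun h => ⟨h, h, List.prefix_rfl⟩⟩
    rw [e]
    exact forall_congr' fun hx => by simp [isLeaf_iff T hx]

theorem MDef.root : MDef fun (T : UTree A) v _ => v 1 ∈ T.dom → v 1 = [] :=
  ((MDef.desc 1 1).imp (MDef.all 3 ((MDef.desc 3 1).imp (MDef.eq 3 1)))).congr fun T v _ => by
    have e : T.descR (v 1) (v 1) ↔ v 1 ∈ T.dom :=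
      ⟨fun h => h.1, fun h => ⟨h, h, List.prefix_rfl⟩⟩
    rw [e]
    exact forall_congr' fun hx => by simp [root_iff T hx]

/-- The local conditions that turn a labelling `c` of the nodes by pairs (state, DFA state) into an
accepting run selecting `s`: the second component at a child is the state the DFA reaches after
reading the automaton states of all siblings up to and including that child. -/
structure LocalRun (QA : QAut A) {H : Type} (h₀ : H) (step : H → QA.N.Q → H)
    (acc : QA.N.Q × A → Set H) (T : UTree A) (c : Node → QA.N.Q × H) (s : Node) : Prop where
  first : ∀ x y, T.firstChildR x y → (c y).2 = step h₀ (c y).1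
  next : ∀ x y, T.nsR x y → (c y).2 = step (c x).2 (c y).1
  last : ∀ x y, lastChildR T x y → (c y).2 ∈ acc ((c x).1, T.label x)
  leaf : ∀ x, T.isLeaf x → h₀ ∈ acc ((c x).1, T.label x)
  root : (c []).1 ∈ QA.N.F
  sel : ((c s).1, T.label s) ∈ QA.S

/-- Here `step`, `h₀`, `acc` is one DFA that decides membership in all the languages `δ(q, a)`. -/
theorem mem_existsSem_iff (QA : QAut A) {H : Type} (h₀ : H) (step : H → QA.N.Q → H)
    (acc : QA.N.Q × A → Set H)
    (hacc : ∀ i w, w ∈ (QA.N.δ i.1 i.2).matches' ↔ w.foldl step h₀ ∈ acc i)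
    (T : UTree A) (s : Node) (hs : s ∈ T.dom) :
    s ∈ QA.existsSem T ↔ ∃ c, LocalRun QA h₀ step acc T c s := by
  constructor
  · rintro ⟨-, ρ, hρ, hF, hS⟩
    -- `d x i` is the state of the DFA after reading the run on the first `i` children of `x`
    let d : Node → ℕ → H := fun x i => ((List.range i).map fun j => ρ (x ++ [j])).foldl step h₀
    have hd : ∀ x i, d x (i + 1) = step (d x i) (ρ (x ++ [i])) := fun x i =>
      foldl_range_succ step h₀ _ i
    have hrun : ∀ x ∈ T.dom, d x (T.childCount x) ∈ acc (ρ x, T.label x) := by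
      intro x hx
      have := hρ x hx
      rw [map_childrenList] at this
      exact (hacc (ρ x, T.label x) _).1 this
    refine ⟨fun t => (ρ t, d t.dropLast (t.getLastD 0 + 1)), ?_, ?_, ?_, ?_, hF, hS⟩
    · rintro x y ⟨hx, hy, rfl⟩
      simp [hd, d]
    · rintro x y ⟨hx, hy, u, i, rfl, rfl⟩
      simp [hd]
    · rintro x y ⟨hx, hy, i, rfl, hi⟩
      rw [T.mem_dom_iff] at hy hi
      have : T.childCount x = i + 1 := by omega
      have h := hrun x hx
      rw [this] at h
      simpa using h
    · rintro x ⟨hx, hl⟩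
      have : T.childCount x = 0 := by
        have := hl 0
        rw [T.mem_dom_iff] at this
        omega
      have h := hrun x hx
      rwa [this] at h
  · rintro ⟨c, hc⟩
    refine ⟨hs, fun t => (c t).1, fun x hx => ?_, hc.root, hc.sel⟩
    rw [map_childrenList]
    refine (hacc ((c x).1, T.label x) _).2 ?_
    have key : ∀ i < T.childCount x,
        ((List.range (i + 1)).map fun j => (c (x ++ [j])).1).foldl step h₀ = (c (x ++ [i])).2 := by
      intro i
      induction i with
      | zero =>
        intro hi
        rw [hc.first x (x ++ [0]) ⟨hx, (T.mem_dom_iff _ _).2 hi, rfl⟩]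
        simp
      | succ i ih =>
        intro hi
        rw [foldl_range_succ, ih (by omega), hc.next (x ++ [i]) (x ++ [i + 1])
          ⟨(T.mem_dom_iff _ _).2 (by omega), (T.mem_dom_iff _ _).2 hi, x, i, rfl, rfl⟩]
    rcases hn : T.childCount x with _ | n
    · refine hc.leaf x ⟨hx, fun i => ?_⟩
      rw [T.mem_dom_iff]
      omega
    · rw [key n (by omega)]
      refine hc.last x _ ⟨hx, (T.mem_dom_iff _ _).2 (by omega), n, rfl, ?_⟩
      rw [T.mem_dom_iff]
      omega

/-- The formula guesses, by one set variable per pair (state, DFA state), a labelling of the nodes and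
states that it satisfies the conditions of `LocalRun`. -/
theorem exists_mso_of_qaut [Finite A] (QA : QAut A) : ∃ φ : MSO A, φ.DefinesU QA.existsSem := by
  have : Finite QA.N.Q := by
    have := QA.N.fintype_Q
    infer_instance
  obtain ⟨H, _, h₀, step, acc, hacc⟩ :=
    exists_common_dfa (ι := QA.N.Q × A) fun i => QA.N.δ i.1 i.2
  let R := QA.N.Q × H
  obtain ⟨k, ⟨e⟩⟩ := Finite.exists_equiv_fin R
  let idx : R → ℕ := fun r => (e r : ℕ)
  have hidx : ∀ r, idx r < k := fun r => (e r).2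
  have hinj : ∀ r r', idx r = idx r' → r = r' := fun r r' h => e.injective (Fin.ext h)
  have hpart : MDef fun (T : UTree A) _ V => ∀ x ∈ T.dom,
      (∃ r, x ∈ V (idx r)) ∧ ∀ r r', x ∈ V (idx r) → x ∈ V (idx r') → r = r' :=
    (MDef.all 1 ((MDef.exists_finite fun r => MDef.mem (idx r) 1).and
      (MDef.forall_finite fun r => MDef.forall_finite fun r' => (MDef.mem (idx r) 1).imp
        ((MDef.mem (idx r') 1).imp (MDef.const (r = r')))))).congr fun T v V => by simp
  have hsel : MDef fun (T : UTree A) v V => ∀ (p : R) (a : A), v 0 ∈ V (idx p) →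
      (v 0 ∈ T.dom ∧ T.label (v 0) = a) → (p.1, a) ∈ QA.S :=
    MDef.forall_finite fun p => MDef.forall_finite fun a => (MDef.mem (idx p) 0).imp
      ((MDef.lab a 0).imp (MDef.const _))
  have hfirst := MDef.binary idx (MDef.firstChildR (A := A)) fun _ _ r => r.2 = step h₀ r.1
  have hnext := MDef.binary idx (MDef.nsR (A := A)) fun p _ r => r.2 = step p.2 r.1
  have hlast := MDef.binary idx (MDef.lastChildR (A := A)) fun p a r => r.2 ∈ acc (p.1, a)
  have hleaf := MDef.unary idx (MDef.isLeaf (A := A)) fun p a => h₀ ∈ acc (p.1, a)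
  have hroot := MDef.unary (U := fun _ x => x = []) idx (MDef.root (A := A))
    fun p _ => p.1 ∈ QA.N.F
  obtain ⟨φ, hφ⟩ := ((hpart.and (hsel.and (hfirst.and (hnext.and
    (hlast.and (hleaf.and hroot)))))).exists_sets k)
  refine ⟨φ, fun T v V s hs => ?_⟩
  rw [← hφ, mem_existsSem_iff QA h₀ step acc hacc T s hs]
  simp only [Function.update_self]
  constructor
  · rintro ⟨c, hc⟩
    have hV : ∃ V' : ℕ → Set Node, (∀ i < k, V' i ⊆ ↑T.dom) ∧ (∀ i, k ≤ i → V' i = V i) ∧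
        ∀ r x, x ∈ V' (idx r) ↔ x ∈ T.dom ∧ c x = r := by
      refine ⟨fun i => if i < k then {t | t ∈ T.dom ∧ idx (c t) = i} else V i,
        fun i hi t ht => ?_, fun i hi => ?_, fun r x => ?_⟩
      · simp only [hi, if_true] at ht
        exact ht.1
      · simp [hi]
      · simp only [hidx, if_true, Set.mem_ofPred_eq]
        exact and_congr_right fun _ => ⟨hinj _ _, fun h => by rw [h]⟩
    obtain ⟨V', h1, h2, h3⟩ := hV
    refine ⟨V', h1, h2, ?_⟩
    simp only [h3]
    refine ⟨?_, ?_, ?_, ?_, ?_, ?_, ?_⟩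
    · intro x hx
      exact ⟨⟨_, hx, rfl⟩, fun r r' h h' => h.2.symm.trans h'.2⟩
    · rintro p a ⟨-, rfl⟩ ⟨-, rfl⟩
      exact hc.sel
    · rintro x - y - h p a r ⟨-, rfl⟩ rfl ⟨-, rfl⟩
      exact hc.first x y h
    · rintro x - y - h p a r ⟨-, rfl⟩ rfl ⟨-, rfl⟩
      exact hc.next x y h
    · rintro x - y - h p a r ⟨-, rfl⟩ rfl ⟨-, rfl⟩
      exact hc.last x y h
    · rintro x - h p a ⟨-, rfl⟩ rfl
      exact hc.leaf x h
    · rintro x - rfl p a ⟨-, rfl⟩ rfl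
      exact hc.root
  · rintro ⟨V', -, -, hp, hS, hfi, hne, hla, hle, hro⟩
    have : Nonempty R := ⟨(hp [] T.nil_mem).1.choose⟩
    choose! c hc using fun x hx => (hp x hx).1
    refine ⟨c, ⟨fun x y h => ?_, fun x y h => ?_, fun x y h => ?_, fun x h => ?_, ?_, ?_⟩⟩
    · exact hfi x h.1 y h.2.1 h _ _ _ (hc x h.1) rfl (hc y h.2.1)
    · exact hne x h.1 y h.2.1 h _ _ _ (hc x h.1) rfl (hc y h.2.1)
    · exact hla x h.1 y h.2.1 h _ _ _ (hc x h.1) rfl (hc y h.2.1)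
    · exact hle x h.1 h _ _ (hc x h.1) rfl
    · exact hro [] T.nil_mem rfl _ _ (hc [] T.nil_mem) rfl
    · exact hS _ _ (hc s hs) ⟨hs, rfl⟩

end AutomataToMSO

/-! ### Duality and the equivalence -/

/-- A query automaton with the complementary selection set: its existential semantics is the
complement of the universal semantics of the original one. -/
def QAut.dual {A : Type} (QA : QAut A) : QAut A := ⟨QA.N, QA.Sᶜ⟩

theorem mem_forallSem_dual {A : Type} (QA : QAut A) (T : UTree A) (s : Node) :
    s ∈ QA.dual.forallSem T ↔ s ∈ T.dom ∧ s ∉ QA.existsSem T := by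
  simp only [QAut.forallSem, QAut.existsSem, QAut.dual, Set.mem_ofPred_eq]
  refine and_congr_right fun hs => ?_
  simp only [hs, true_and, not_exists, not_and]
  exact Iff.rfl

theorem dual_dual {A : Type} (QA : QAut A) : QA.dual.dual = QA := by
  obtain ⟨N, S⟩ := QA
  exact congrArg (QAut.mk N) (compl_compl S)

theorem MSO.DefinesU.compl {A : Type} {φ : MSO A} {Q : UTree A → Set Node} (h : φ.DefinesU Q) :
    (MSO.not φ).DefinesU fun T => ↑T.dom \ Q T := fun T v V s hs => by
  have := h T v V s hs
  simp [MSO.Sat, hs, this]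

/-- For a unary query `Q` on ordered unranked Σ-trees, the
following are equivalent: (1) `Q` is MSO-definable; (2) `Q` is the existential
semantics of some query automaton; (3) `Q` is the universal semantics of some
query automaton. -/
theorem mso_iff_query_automaton (A : Type) [Fintype A]
    (Q : UTree A → Set Node) (hQ : ∀ T, Q T ⊆ ↑T.dom) :
    ((∃ φ : MSO A, φ.DefinesU Q) ↔ ∃ QA : QAut A, ∀ T, Q T = QA.existsSem T) ∧
    ((∃ φ : MSO A, φ.DefinesU Q) ↔ ∃ QA : QAut A, ∀ T, Q T = QA.forallSem T) := by
  have hexists : ∀ Q : UTree A → Set Node, (∀ T, Q T ⊆ ↑T.dom) →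
      ((∃ φ : MSO A, φ.DefinesU Q) ↔ ∃ QA : QAut A, ∀ T, Q T = QA.existsSem T) := by
    refine fun Q hQ => ⟨fun ⟨φ, hφ⟩ => exists_qaut_of_mso hQ hφ, fun ⟨QA, h⟩ => ?_⟩
    obtain rfl : Q = QA.existsSem := funext h
    exact exists_mso_of_qaut QA
  refine ⟨hexists Q hQ, ?_, ?_⟩
  · rintro ⟨φ, hφ⟩
    obtain ⟨QA, hQA⟩ := (hexists _ fun T => Set.sdiff_subset).1 ⟨_, hφ.compl⟩
    refine ⟨QA.dual, fun T => Set.ext fun s => ?_⟩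
    rw [mem_forallSem_dual, ← hQA T]
    have := @hQ T s
    simp only [Set.mem_sdiff, Finset.mem_coe] at this ⊢
    tauto
  · rintro ⟨QA, hQA⟩
    obtain ⟨φ, hφ⟩ := exists_mso_of_qaut QA.dual
    refine ⟨_, fun T v V s hs => Iff.trans ?_ (hφ.compl T v V s hs)⟩
    rw [hQA T, ← dual_dual QA, mem_forallSem_dual, dual_dual]
    rfl

end UnrankedTrees
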